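/- Bias identity for the AIPW pseudo-outcome with estimated nuisance functions: for every bounded measurable h : 𝒳 → ℝ, E[h(X)·Γ̃] − E[h(X)·τ(X)] = E[h(X)·r(X)], where r(x) := (e(x)/ẽ(x) − 1)(μ₁(x) − μ̃₁(x)) − ((1−e(x))/(1−ẽ(x)) − 1)(μ₀(x) − μ̃₀(x)). -/

import Mathlib

open MeasureTheory ProbabilityTheory

/-!
Let `m = σ(X)`. On one treatment arm, with weight `w`, indicator `A` and outcome model `ν`, pulling
the `m`-measurable factors out of the conditional expectation turns the score `w A (Y - ν) + ν` into
`w p (μ - ν) + ν = μ + (w p - 1) (μ - ν)`, where `p = E[A | m]` and `p μ = E[A Y | m]`. The AIPW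
pseudo-outcome is the score with `A = W`, `w = 1 / ẽ` minus the one with `A = 1 - W`,
`w = 1 / (1 - ẽ)`, so `E[Γ̃ | m] = τ + r`; it remains to integrate against `h(X)`.
-/

open scoped ENNReal

noncomputable section Defs

variable {Ω : Type*}

/-- Augmented weighted score of one treatment arm: the outcome model `ν`, corrected by the residual
of the units with indicator `A`, weighted by `w`. For the treated arm `A = W` and `w = 1 / ẽ(X)`,
for the control arm `A = 1 - W` and `w = 1 / (1 - ẽ(X))`. -/
def armScore (w A Y ν : Ω → ℝ) : Ω → ℝ :=
  w * (A * (Y - ν)) + ν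

/-- The AIPW pseudo-outcome `Γ̃` for the treatment `W` and the outcome `Y`, with propensity score
`q` and outcome models `ν₀` (control) and `ν₁` (treated). Nuisance functions are functions on `Ω`:
`ẽ` on the covariate space enters as `q = ẽ ∘ X`. -/
def aipwPseudoOutcome (q W Y ν₀ ν₁ : Ω → ℝ) (ω : Ω) : ℝ :=
  W ω * (Y ω - ν₁ ω) / q ω + ν₁ ω - (1 - W ω) * (Y ω - ν₀ ω) / (1 - q ω) - ν₀ ω

/-- The conditional bias `r` of the AIPW pseudo-outcome, for the true nuisances `p`, `μ₀`, `μ₁` and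
the estimated ones `q`, `ν₀`, `ν₁`, all as functions on `Ω`. -/
def aipwBias (p q μ₀ μ₁ ν₀ ν₁ : Ω → ℝ) (ω : Ω) : ℝ :=
  (p ω / q ω - 1) * (μ₁ ω - ν₁ ω) - ((1 - p ω) / (1 - q ω) - 1) * (μ₀ ω - ν₀ ω)

theorem aipwPseudoOutcome_eq_armScore_sub (q W Y ν₀ ν₁ : Ω → ℝ) :
    aipwPseudoOutcome q W Y ν₀ ν₁ = armScore q⁻¹ W Y ν₁ - armScore (1 - q)⁻¹ (1 - W) Y ν₀ := by
  ext ω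
  simp only [aipwPseudoOutcome, armScore, Pi.sub_apply, Pi.add_apply, Pi.mul_apply, Pi.inv_apply,
    Pi.one_apply]
  ring

end Defs

section Bounded

variable {Ω : Type*} [MeasurableSpace Ω] {P : Measure Ω}

theorem memLp_top_inv_of_le_norm {𝕜 : Type*} [NormedDivisionRing 𝕜] {f : Ω → 𝕜} {η : ℝ}
    (hη : 0 < η) (hf : AEStronglyMeasurable f P) (hle : ∀ᵐ ω ∂P, η ≤ ‖f ω‖) : MemLp f⁻¹ ∞ P := by
  refine memLp_top_of_bound hf.inv₀ η⁻¹ ?_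
  filter_upwards [hle] with ω hω
  rw [Pi.inv_apply, norm_inv]
  exact inv_anti₀ hη hω

theorem memLp_top_of_ae_eq_zero_or_one {f : Ω → ℝ} (hf : AEStronglyMeasurable f P)
    (h01 : ∀ᵐ ω ∂P, f ω = 0 ∨ f ω = 1) : MemLp f ∞ P := by
  refine memLp_top_of_bound hf 1 ?_
  filter_upwards [h01] with ω hω
  rcases hω with hω | hω <;> simp [hω]

variable {𝒳 : Type*} [m𝒳 : MeasurableSpace 𝒳] {X : Ω → 𝒳} {g : 𝒳 → ℝ}

theorem memLp_top_comp_of_norm_le {C : ℝ} (hX : Measurable X) (hg : Measurable g)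
    (hgC : ∀ x, ‖g x‖ ≤ C) : MemLp (fun ω => g (X ω)) ∞ P :=
  memLp_top_of_bound (hg.comp hX).aestronglyMeasurable C (ae_of_all _ fun ω => hgC (X ω))

theorem aestronglyMeasurable_comap_comp (hg : Measurable g) :
    AEStronglyMeasurable[m𝒳.comap X] (fun ω => g (X ω)) P :=
  (hg.comp (comap_measurable X)).aestronglyMeasurable

end Bounded

section CondExp

variable {Ω : Type*} {m mΩ : MeasurableSpace Ω} {P : Measure Ω}

theorem integral_mul_eq_of_condExp_ae_eq (hm : m ≤ mΩ) [SigmaFinite (P.trim hm)] {g Z F : Ω → ℝ}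
    (hg : AEStronglyMeasurable[m] g P) (hgZ : Integrable (g * Z) P) (hZ : Integrable Z P)
    (hF : P[Z | m] =ᵐ[P] F) : ∫ ω, g ω * Z ω ∂P = ∫ ω, g ω * F ω ∂P :=
  calc ∫ ω, g ω * Z ω ∂P = ∫ ω, P[g * Z | m] ω ∂P := (integral_condExp hm).symm
    _ = ∫ ω, g ω * F ω ∂P := integral_congr_ae <|
      (condExp_mul_of_aestronglyMeasurable_left hg hgZ hZ).trans (.mul .rfl hF)

theorem condExp_one_sub (hm : m ≤ mΩ) [IsFiniteMeasure P] {A : Ω → ℝ} (hA : Integrable A P) :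
    P[1 - A | m] =ᵐ[P] 1 - P[A | m] :=
  (condExp_sub (integrable_const 1) hA m).trans (.sub (.of_eq (condExp_const hm (1 : ℝ))) .rfl)

variable {A Y p μ ν w : Ω → ℝ}

theorem integrable_mul_sub (hAY : Integrable (A * Y) P) (hAν : Integrable (A * ν) P) :
    Integrable (A * (Y - ν)) P := by
  rw [mul_sub]
  exact hAY.sub hAν

theorem condExp_mul_sub (hA : Integrable A P) (hAY : Integrable (A * Y) P)
    (hAν : Integrable (A * ν) P) (hν : AEStronglyMeasurable[m] ν P)
    (hp : P[A | m] =ᵐ[P] p) (hpμ : P[A * Y | m] =ᵐ[P] p * μ) :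
    P[A * (Y - ν) | m] =ᵐ[P] p * (μ - ν) := by
  have hpν : P[A * ν | m] =ᵐ[P] p * ν :=
    (condExp_mul_of_aestronglyMeasurable_right hν hAν hA).trans (.mul hp .rfl)
  rw [mul_sub, mul_sub]
  exact (condExp_sub hAY hAν m).trans (.sub hpμ hpν)

theorem integrable_armScore (hAY : Integrable (A * Y) P) (hAν : Integrable (A * ν) P)
    (hν : Integrable ν P) (hw : MemLp w ∞ P) : Integrable (armScore w A Y ν) P :=
  ((integrable_mul_sub hAY hAν).mul_of_top_right hw).add hν

theorem condExp_armScore (hm : m ≤ mΩ) [SigmaFinite (P.trim hm)]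
    (hA : Integrable A P) (hAY : Integrable (A * Y) P) (hAν : Integrable (A * ν) P)
    (hν : Integrable ν P) (hνm : AEStronglyMeasurable[m] ν P)
    (hw : MemLp w ∞ P) (hwm : AEStronglyMeasurable[m] w P)
    (hp : P[A | m] =ᵐ[P] p) (hpμ : P[A * Y | m] =ᵐ[P] p * μ) :
    P[armScore w A Y ν | m] =ᵐ[P] μ + (w * p - 1) * (μ - ν) := by
  have hres : Integrable (A * (Y - ν)) P := integrable_mul_sub hAY hAν
  have hwres : Integrable (w * (A * (Y - ν))) P := hres.mul_of_top_right hw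
  calc P[armScore w A Y ν | m]
      =ᵐ[P] P[w * (A * (Y - ν)) | m] + P[ν | m] := condExp_add hwres hν m
    _ =ᵐ[P] w * P[A * (Y - ν) | m] + ν :=
      .add (condExp_mul_of_aestronglyMeasurable_left hwm hwres hres)
        (condExp_of_aestronglyMeasurable' hm hνm hν)
    _ =ᵐ[P] w * (p * (μ - ν)) + ν :=
      .add (.mul .rfl (condExp_mul_sub hA hAY hAν hνm hp hpμ)) .rfl
    _ = μ + (w * p - 1) * (μ - ν) := by ring

end CondExp

section Aipw

variable {Ω : Type*} {m mΩ : MeasurableSpace Ω} {P : Measure Ω} {W Y p q μ₀ μ₁ ν₀ ν₁ : Ω → ℝ}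

theorem integrable_aipwPseudoOutcome (hW : MemLp W ∞ P) (hY : Integrable Y P)
    (hν₀ : Integrable ν₀ P) (hν₁ : Integrable ν₁ P)
    (hq₁ : MemLp q⁻¹ ∞ P) (hq₀ : MemLp (1 - q)⁻¹ ∞ P) :
    Integrable (aipwPseudoOutcome q W Y ν₀ ν₁) P := by
  have hW' : MemLp (1 - W) ∞ P := (memLp_top_const 1).sub hW
  rw [aipwPseudoOutcome_eq_armScore_sub]
  exact (integrable_armScore (hY.mul_of_top_right hW) (hν₁.mul_of_top_right hW) hν₁ hq₁).sub
    (integrable_armScore (hY.mul_of_top_right hW') (hν₀.mul_of_top_right hW') hν₀ hq₀)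

theorem condExp_aipwPseudoOutcome (hm : m ≤ mΩ) [IsFiniteMeasure P]
    (hW : MemLp W ∞ P) (hY : Integrable Y P)
    (hν₀ : Integrable ν₀ P) (hν₁ : Integrable ν₁ P)
    (hν₀m : AEStronglyMeasurable[m] ν₀ P) (hν₁m : AEStronglyMeasurable[m] ν₁ P)
    (hq₁ : MemLp q⁻¹ ∞ P) (hq₀ : MemLp (1 - q)⁻¹ ∞ P) (hqm : AEStronglyMeasurable[m] q P)
    (hp : P[W | m] =ᵐ[P] p) (hpμ₁ : P[W * Y | m] =ᵐ[P] p * μ₁)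
    (hpμ₀ : P[(1 - W) * Y | m] =ᵐ[P] (1 - p) * μ₀) :
    P[aipwPseudoOutcome q W Y ν₀ ν₁ | m] =ᵐ[P] (μ₁ - μ₀) + aipwBias p q μ₀ μ₁ ν₀ ν₁ := by
  have hWi : Integrable W P := hW.integrable le_top
  have hW' : MemLp (1 - W) ∞ P := (memLp_top_const 1).sub hW
  have hp' : P[1 - W | m] =ᵐ[P] 1 - p := (condExp_one_sub hm hWi).trans (.sub .rfl hp)
  have hWY := hY.mul_of_top_right hW
  have hWν₁ := hν₁.mul_of_top_right hW
  have hWY' := hY.mul_of_top_right hW'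
  have hWν₀' := hν₀.mul_of_top_right hW'
  have treated : P[armScore q⁻¹ W Y ν₁ | m] =ᵐ[P] μ₁ + (q⁻¹ * p - 1) * (μ₁ - ν₁) :=
    condExp_armScore hm hWi hWY hWν₁ hν₁ hν₁m hq₁ hqm.inv₀ hp hpμ₁
  have control : P[armScore (1 - q)⁻¹ (1 - W) Y ν₀ | m]
      =ᵐ[P] μ₀ + ((1 - q)⁻¹ * (1 - p) - 1) * (μ₀ - ν₀) :=
    condExp_armScore hm (hW'.integrable le_top) hWY' hWν₀' hν₀ hν₀m hq₀
      (aestronglyMeasurable_one.sub hqm).inv₀ hp' hpμ₀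
  rw [aipwPseudoOutcome_eq_armScore_sub]
  filter_upwards [condExp_sub (integrable_armScore hWY hWν₁ hν₁ hq₁)
    (integrable_armScore hWY' hWν₀' hν₀ hq₀) m, treated, control] with ω hsub h₁ h₀
  rw [hsub, Pi.sub_apply, h₁, h₀]
  simp only [aipwBias, Pi.add_apply, Pi.sub_apply, Pi.mul_apply, Pi.inv_apply, Pi.one_apply]
  ring

theorem aipw_estimated_nuisance_bias_general (hm : m ≤ mΩ) [IsFiniteMeasure P]
    (hW : MemLp W ∞ P) (hY : Integrable Y P)
    (hp : P[W | m] =ᵐ[P] p) (hpμ₁ : P[W * Y | m] =ᵐ[P] p * μ₁)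
    (hpμ₀ : P[(1 - W) * Y | m] =ᵐ[P] (1 - p) * μ₀) (hτ : Integrable (μ₁ - μ₀) P)
    (hν₀ : Integrable ν₀ P) (hν₁ : Integrable ν₁ P)
    (hν₀m : AEStronglyMeasurable[m] ν₀ P) (hν₁m : AEStronglyMeasurable[m] ν₁ P)
    (hqm : AEStronglyMeasurable[m] q P) {η : ℝ} (hη : 0 < η)
    (hqη : ∀ᵐ ω ∂P, η ≤ q ω ∧ q ω ≤ 1 - η)
    {h : Ω → ℝ} (hh : MemLp h ∞ P) (hhm : AEStronglyMeasurable[m] h P) :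
    (∫ ω, h ω * aipwPseudoOutcome q W Y ν₀ ν₁ ω ∂P) - (∫ ω, h ω * (μ₁ ω - μ₀ ω) ∂P)
      = ∫ ω, h ω * aipwBias p q μ₀ μ₁ ν₀ ν₁ ω ∂P := by
  have hq : AEStronglyMeasurable q P := hqm.mono hm
  have hq₁ : MemLp q⁻¹ ∞ P :=
    memLp_top_inv_of_le_norm hη hq (hqη.mono fun ω hω => hω.1.trans (le_abs_self _))
  have hq₀ : MemLp (1 - q)⁻¹ ∞ P :=
    memLp_top_inv_of_le_norm hη (aestronglyMeasurable_one.sub hq)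
      (hqη.mono fun ω hω => (le_sub_comm.1 hω.2).trans (le_abs_self _))
  have hΓ := integrable_aipwPseudoOutcome hW hY hν₀ hν₁ hq₁ hq₀
  have hcond := condExp_aipwPseudoOutcome hm hW hY hν₀ hν₁ hν₀m hν₁m hq₁ hq₀ hqm hp hpμ₁ hpμ₀
  have hbias : Integrable (aipwBias p q μ₀ μ₁ ν₀ ν₁) P :=
    (integrable_add_iff_integrable_right hτ).1 (integrable_condExp.congr hcond)
  rw [integral_mul_eq_of_condExp_ae_eq hm hhm (hΓ.mul_of_top_right hh) hΓ hcond, sub_eq_iff_eq_add']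
  simp only [Pi.add_apply, Pi.sub_apply, mul_add]
  exact integral_add (hτ.mul_of_top_right hh) (hbias.mul_of_top_right hh)

end Aipw

/-- Bias identity for the AIPW pseudo-outcome with estimated nuisance functions: for every
bounded measurable `h`, `E[h(X)·Γ̃] − E[h(X)·τ(X)] = E[h(X)·r(X)]`, where
`r(x) := (e(x)/ẽ(x) − 1)(μ₁(x) − μ̃₁(x)) − ((1−e(x))/(1−ẽ(x)) − 1)(μ₀(x) − μ̃₀(x))`. -/
theorem aipw_estimated_nuisance_bias
    {Ω 𝒳 : Type*} [MeasurableSpace Ω] [m𝒳 : MeasurableSpace 𝒳]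
    (P : Measure Ω) [IsProbabilityMeasure P]
    (X : Ω → 𝒳) (W Y : Ω → ℝ)
    (hX : Measurable X) (hW : Measurable W) (hY : Measurable Y)
    (hW01 : ∀ᵐ ω ∂P, W ω = 0 ∨ W ω = 1)
    (M : ℝ) (hM : 0 < M) (hYb : ∀ᵐ ω ∂P, |Y ω| ≤ M)
    (e μ₀ μ₁ : 𝒳 → ℝ)
    (he : Measurable e) (hμ₀ : Measurable μ₀) (hμ₁ : Measurable μ₁)
    (C₀ C₁ : ℝ) (hμ₀b : ∀ x, |μ₀ x| ≤ C₀) (hμ₁b : ∀ x, |μ₁ x| ≤ C₁)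
    (η : ℝ) (hη₀ : 0 < η) (hη₁ : η < 1/2)
    (heb : ∀ x, η ≤ e x ∧ e x ≤ 1 - η)
    (hce : P[W | m𝒳.comap X] =ᵐ[P] fun ω => e (X ω))
    (hc1 : P[fun ω => W ω * Y ω | m𝒳.comap X] =ᵐ[P] fun ω => e (X ω) * μ₁ (X ω))
    (hc0 : P[fun ω => (1 - W ω) * Y ω | m𝒳.comap X]
        =ᵐ[P] fun ω => (1 - e (X ω)) * μ₀ (X ω))
    (μt₀ μt₁ et : 𝒳 → ℝ)
    (hμt₀ : Measurable μt₀) (hμt₁ : Measurable μt₁) (het : Measurable et)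
    (Ct₀ Ct₁ : ℝ) (hμt₀b : ∀ x, |μt₀ x| ≤ Ct₀) (hμt₁b : ∀ x, |μt₁ x| ≤ Ct₁)
    (η' : ℝ) (hη'₀ : 0 < η') (hη'₁ : η' < 1/2)
    (hetb : ∀ x, η' ≤ et x ∧ et x ≤ 1 - η') :
    ∀ (h : 𝒳 → ℝ) (Ch : ℝ), Measurable h → (∀ x, |h x| ≤ Ch) →
      (∫ ω, h (X ω) * (W ω * (Y ω - μt₁ (X ω)) / et (X ω) + μt₁ (X ω)
            - (1 - W ω) * (Y ω - μt₀ (X ω)) / (1 - et (X ω)) - μt₀ (X ω)) ∂P)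
        - (∫ ω, h (X ω) * (μ₁ (X ω) - μ₀ (X ω)) ∂P)
        = ∫ ω, h (X ω) * ((e (X ω) / et (X ω) - 1) * (μ₁ (X ω) - μt₁ (X ω))
            - ((1 - e (X ω)) / (1 - et (X ω)) - 1) * (μ₀ (X ω) - μt₀ (X ω))) ∂P := by
  intro h Ch hh hhb
  have hint {g : 𝒳 → ℝ} {C : ℝ} (hg : Measurable g) (hgC : ∀ x, |g x| ≤ C) :
      Integrable (fun ω => g (X ω)) P :=
    (memLp_top_comp_of_norm_le hX hg hgC).integrable le_top
  exact aipw_estimated_nuisance_bias_general hX.comap_le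
    (memLp_top_of_ae_eq_zero_or_one hW.aestronglyMeasurable hW01)
    (.of_bound hY.aestronglyMeasurable M hYb) hce hc1 hc0 ((hint hμ₁ hμ₁b).sub (hint hμ₀ hμ₀b))
    (hint hμt₀ hμt₀b) (hint hμt₁ hμt₁b) (aestronglyMeasurable_comap_comp hμt₀)
    (aestronglyMeasurable_comap_comp hμt₁) (aestronglyMeasurable_comap_comp het) hη'₀
    (ae_of_all _ fun ω => hetb (X ω)) (memLp_top_comp_of_norm_le hX hh hhb)
    (aestronglyMeasurable_comap_comp hh)
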